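/- Let μ and ν be compactly supported probability measures on ℝ with μ nondegenerate, and let ρ be a free additive convolution of μ and ν. If F̂_{μ,ν} is strictly concave on dom(F̂_{μ,ν}), then F̂_{μ,ν}′(t) > 0 for every t ∈ dom(F̂_{μ,ν}) with t < h*_{μ,ν}, and z*_ρ = sup{ F̂_{μ,ν}(h) : h ∈ dom(F̂_{μ,ν}) }. -/

import Mathlib

/-!
The argument rests on analytic subordination. On its domain `F̂` is the functional inverse of the
subordination function `G_ν^⟨-1⟩ ∘ G_ρ`: near `-∞` the additivity of the `R`-transforms says
`G_ρ(F̂(h)) = G_ν(h)`, and this persists by analyticity on every half-line that `F̂` maps below `a_ρ`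
(`subordination_eqOn`). Moreover `F̂ → -∞` at `-∞`.

*Positivity of the derivative.* Since `F̂` is concave and tends to `-∞` at `-∞`, the set `Ĥ` is
nonempty; hence any `t < h* = sup Ĥ` lies to the left of an element of `Ĥ`.

*Upper bound `F̂ ≤ a_ρ`* (`Fhat_le_aInf`). Otherwise `F̂` takes the value `a_ρ` at some `s`, by
concavity with `F̂' > 0` there and `F̂ < a_ρ` to the left. Inverting `F̂` near `s` continues `G_ρ`
analytically across `a_ρ` from the left. By Pringsheim's principle this is impossible
(`not_analytic_continuation`): the Taylor coefficients of `G_ρ` at points left of `a_ρ` are the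
inverse moments `∫ (λ - z)⁻ⁿ⁻¹ dρ(λ) ≥ 0`, and a larger disc of convergence would force `ρ` to
have no mass near `a_ρ`.

*Lower bound `a_ρ ≤ sup F̂`* (`aInf_le_sSup`). Put `S = sup F̂` and suppose `S < a_ρ`. For `z < S`
both subordination functions `u = G_μ^⟨-1⟩(G_ρ(z))` and `v = G_ν^⟨-1⟩(G_ρ(z))` are defined, and with
`h_μ(w) = -1 / G_μ(w) - w` they satisfy `u = z + h_ν(v)`, `v = z + h_μ(u)`,
`u + v = z - 1 / G_ρ(z)`. The inverse moments are log-convex, so Kaluza's theorem on reciprocals of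
power series shows that `h_μ'` and all its derivatives are nonnegative (`absMono_deriv_hfun`); the
fixed-point equations transfer this to `u'` and `v'` (`absMono_deriv_subordination`). Since `u + v`
is analytic at `S`, so is each summand, its Taylor coefficients being dominated by those of the sum
(`exists_continuation_of_sum`). By the Pringsheim argument the continued values cannot be `a_μ` or
`a_ν`, so `q = v(S)` lies in the domain and `F̂(q) = S` (`subordination_closed`). The domain is
open, and to the right of `q` the identity `G_ρ ∘ F̂ = G_ν` makes `F̂` exceed `S`: a contradiction.
-/

open MeasureTheory Filter Set

noncomputable section

/-- The topological support of a Borel measure on `ℝ`. -/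
def msupp (μ : Measure ℝ) : Set ℝ := {x : ℝ | ∀ U ∈ nhds x, μ U ≠ 0}

/-- Compact support: some compact set has full measure. -/
def HasCompactSupp (μ : Measure ℝ) : Prop := ∃ K : Set ℝ, IsCompact K ∧ μ K = 1

/-- `a_μ`, the infimum of the support. -/
def aInf (μ : Measure ℝ) : ℝ := sInf (msupp μ)

/-- `b_μ`, the supremum of the support. -/
def bSup (μ : Measure ℝ) : ℝ := sSup (msupp μ)

/-- The (real) Stieltjes transform `G_μ(z) = ∫ (λ - z)⁻¹ dμ(λ)`. -/
def Gst (μ : Measure ℝ) (z : ℝ) : ℝ := ∫ l, (l - z)⁻¹ ∂μ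

/-- `G_μ(a_μ) = lim_{z ↑ a_μ} G_μ(z) ∈ (0,∞]`, as the supremum (in `EReal`) of the values of
`G_μ` on `(-∞, a_μ)` (the two agree since `G_μ` is increasing there). -/
def GaSup (μ : Measure ℝ) : EReal :=
  sSup ((fun z => ((Gst μ z : ℝ) : EReal)) '' Set.Iio (aInf μ))

/-- `G_μ(b_μ) = lim_{z ↓ b_μ} G_μ(z) ∈ [-∞,0)`, as the infimum (in `EReal`) of the values of
`G_μ` on `(b_μ, ∞)` (the two agree since `G_μ` is increasing there). -/
def GbInf (μ : Measure ℝ) : EReal :=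
  sInf ((fun z => ((Gst μ z : ℝ) : EReal)) '' Set.Ioi (bSup μ))

/-- The interval `D̂_μ = (-G_μ(a_μ), -G_μ(b_μ)) ⊆ ℝ`. -/
def Dhat (μ : Measure ℝ) : Set ℝ :=
  {u : ℝ | -(GaSup μ) < (u : EReal) ∧ (u : EReal) < -(GbInf μ)}

/-- The inverse `G_μ^⟨-1⟩` of the restriction of `G_μ` to `ℝ ∖ [a_μ, b_μ]`. -/
def Ginv (μ : Measure ℝ) (g : ℝ) : ℝ :=
  Function.invFunOn (Gst μ) (Set.Iio (aInf μ) ∪ Set.Ioi (bSup μ)) g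

/-- The real `R`-transform `R̂_μ(u) = G_μ^⟨-1⟩(-u) - u⁻¹`, meaningful for `u ∈ D̂_μ ∖ {0}`. -/
def Rhat (μ : Measure ℝ) (u : ℝ) : ℝ := Ginv μ (-u) - u⁻¹

/-- `ρ` is a free additive convolution of `μ` and `ν`. -/
def IsFreeAdd (μ ν ρ : Measure ℝ) : Prop :=
  IsProbabilityMeasure ρ ∧ HasCompactSupp ρ ∧
  ∃ ε > (0 : ℝ), ∀ u : ℝ, u ∈ Set.Ioo (-ε) ε → u ≠ 0 →
    u ∈ Dhat ρ ∧ u ∈ Dhat μ ∧ u ∈ Dhat ν ∧ Rhat ρ u = Rhat μ u + Rhat ν u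

/-- `μ` is nondegenerate: not a point mass. -/
def Nondeg (μ : Measure ℝ) : Prop := ¬ ∃ c : ℝ, μ = Measure.dirac c

/-- The logarithmic potential `U_ρ(z) = ∫ log |z - λ| dρ(λ)`. -/
def Upot (ρ : Measure ℝ) (z : ℝ) : ℝ := ∫ l, Real.log |z - l| ∂ρ

/-- `E_{μ,ν,z}(g) = ∫₀^g s R̂_μ'(-s) ds + ∫ log (λ - z + R̂_μ(-g)) dν(λ)`. -/
def Efun (μ ν : Measure ℝ) (z : ℝ) (g : ℝ) : ℝ :=
  (∫ s in (0:ℝ)..g, s * deriv (Rhat μ) (-s)) + ∫ l, Real.log (l - z + Rhat μ (-g)) ∂ν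

/-- The domain `Ê_{μ,ν,z}` of `E_{μ,ν,z}`. -/
def Ehat (μ ν : Measure ℝ) (z : ℝ) : Set ℝ :=
  {g : ℝ | -g ∈ Dhat μ ∧ g ≠ 0 ∧ z - Rhat μ (-g) < aInf ν}

/-- `F̂_{μ,ν}(h) = R̂_μ(-G_ν(h)) + h`. -/
def Fhat (μ ν : Measure ℝ) (h : ℝ) : ℝ := Rhat μ (-(Gst ν h)) + h

/-- The domain of `F̂_{μ,ν}`. -/
def FhatDom (μ ν : Measure ℝ) : Set ℝ := {h : ℝ | h < aInf ν ∧ -(Gst ν h) ∈ Dhat μ}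

/-- `Ĥ_{μ,ν}`: points of the domain to the left of which `F̂_{μ,ν}'` is positive. -/
def Hhat (μ ν : Measure ℝ) : Set ℝ :=
  {h : ℝ | h ∈ FhatDom μ ν ∧ ∀ t ∈ FhatDom μ ν, t < h → 0 < deriv (Fhat μ ν) t}

/-- `h*_{μ,ν} = sup Ĥ_{μ,ν}`. -/
def hstar (μ ν : Measure ℝ) : ℝ := sSup (Hhat μ ν)

end

noncomputable section

/-! ### The Stieltjes transform left of the support and inverse moments -/

lemma msupp_eq_support (μ : Measure ℝ) : msupp μ = μ.support := by
  ext x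
  simp [msupp, Measure.mem_support_iff_forall, pos_iff_ne_zero]

lemma exists_compact_msupp_subset {μ : Measure ℝ} [IsProbabilityMeasure μ]
    (h : HasCompactSupp μ) : ∃ K : Set ℝ, IsCompact K ∧ msupp μ ⊆ K := by
  obtain ⟨K, hK, h1⟩ := h
  refine ⟨K, hK, ?_⟩
  rw [msupp_eq_support]
  refine Measure.support_subset_of_isClosed hK.isClosed ?_
  rw [mem_ae_iff, prob_compl_eq_zero_iff hK.measurableSet]
  exact h1

lemma ae_aInf_le {μ : Measure ℝ} [IsProbabilityMeasure μ] (h : HasCompactSupp μ) :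
    ∀ᵐ l ∂μ, aInf μ ≤ l := by
  obtain ⟨K, hK, hs⟩ := exists_compact_msupp_subset h
  have h1 : μ.support ∈ ae μ := Measure.support_mem_ae
  filter_upwards [h1] with l hl
  rw [← msupp_eq_support] at hl
  exact csInf_le (hK.bddBelow.mono hs) hl

lemma ae_le_bSup {μ : Measure ℝ} [IsProbabilityMeasure μ] (h : HasCompactSupp μ) :
    ∀ᵐ l ∂μ, l ≤ bSup μ := by
  obtain ⟨K, hK, hs⟩ := exists_compact_msupp_subset h
  have h1 : μ.support ∈ ae μ := Measure.support_mem_ae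
  filter_upwards [h1] with l hl
  rw [← msupp_eq_support] at hl
  exact le_csSup (hK.bddAbove.mono hs) hl

lemma measure_Iio_pos {μ : Measure ℝ} [IsProbabilityMeasure μ] {c : ℝ}
    (hc : aInf μ < c) : 0 < μ.real (Iio c) := by
  have hne : (msupp μ).Nonempty := by
    rw [msupp_eq_support]
    exact Measure.nonempty_support (IsProbabilityMeasure.ne_zero μ)
  obtain ⟨x, hx, hxc⟩ := exists_lt_of_csInf_lt hne hc
  have := hx (Iio c) (Iio_mem_nhds hxc)
  rw [measureReal_def]
  exact ENNReal.toReal_pos this (measure_ne_top _ _)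

/-- The inverse moments `∫ (λ - z)⁻ᵏ dμ(λ)`; for `z < a_μ` the Taylor coefficient of `G_μ` of
order `n` at `z` is the one with `k = n + 1`. -/
def invMom (μ : Measure ℝ) (z : ℝ) (k : ℕ) : ℝ := ∫ l, ((l - z)⁻¹) ^ k ∂μ

lemma invMom_one {μ : Measure ℝ} {z : ℝ} : invMom μ z 1 = Gst μ z := by simp [invMom, Gst]

section InvMom

variable {μ : Measure ℝ} [IsProbabilityMeasure μ] {z : ℝ}

lemma invMom_zero : invMom μ z 0 = 1 := by simp [invMom]

lemma ae_inv_bound (h : HasCompactSupp μ) (hz : z < aInf μ) :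
    ∀ᵐ l ∂μ, 0 < (l - z)⁻¹ ∧ (l - z)⁻¹ ≤ (aInf μ - z)⁻¹ := by
  filter_upwards [ae_aInf_le h] with l hl
  have h1 : 0 < aInf μ - z := by linarith
  have h2 : aInf μ - z ≤ l - z := by linarith
  exact ⟨inv_pos.2 (h1.trans_le h2), inv_anti₀ h1 h2⟩

lemma integrable_inv_pow (h : HasCompactSupp μ) (hz : z < aInf μ) (k : ℕ) :
    Integrable (fun l => ((l - z)⁻¹) ^ k) μ := by
  refine Integrable.of_bound (C := ((aInf μ - z)⁻¹) ^ k) ?_ ?_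
  · exact Measurable.aestronglyMeasurable (by fun_prop)
  · filter_upwards [ae_inv_bound h hz] with l hl
    rw [Real.norm_eq_abs, abs_of_nonneg (pow_nonneg hl.1.le _)]
    exact pow_le_pow_left₀ hl.1.le hl.2 _

lemma invMom_pos (h : HasCompactSupp μ) (hz : z < aInf μ) (k : ℕ) : 0 < invMom μ z k := by
  rw [invMom, integral_pos_iff_support_of_nonneg_ae]
  · have : Function.support (fun l => ((l - z)⁻¹) ^ k) ∈ ae μ := by
      filter_upwards [ae_inv_bound h hz] with l hl
      exact (pow_pos hl.1 _).ne'
    have h1 := prob_compl_eq_zero_iff₀ (μ := μ)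
      (NullMeasurableSet.of_compl (NullMeasurableSet.of_null this))
    rw [h1.1 this]
    exact one_pos
  · filter_upwards [ae_inv_bound h hz] with l hl
    exact (pow_pos hl.1 _).le
  · exact integrable_inv_pow h hz k

lemma invMom_le (h : HasCompactSupp μ) (hz : z < aInf μ) (k : ℕ) : invMom μ z k ≤ ((aInf μ - z)⁻¹) ^ k := by
  have := integral_mono_ae (integrable_inv_pow h hz k)
    (integrable_const (μ := μ) (((aInf μ - z)⁻¹) ^ k)) (by
      filter_upwards [ae_inv_bound h hz] with l hl
      exact pow_le_pow_left₀ hl.1.le hl.2 _)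
  simpa [invMom] using this

/-- Cauchy-Schwarz, read off from the minimum over `t` of `∫ x ^ k * (x - t) ^ 2` with
`x = (λ - z)⁻¹`. -/
lemma invMom_logConvex (h : HasCompactSupp μ) (hz : z < aInf μ) (k : ℕ) :
    invMom μ z (k + 1) ^ 2 ≤ invMom μ z k * invMom μ z (k + 2) := by
  set t := invMom μ z (k + 1) / invMom μ z k with ht
  have h0 := invMom_pos h hz k
  have key : 0 ≤ ∫ l, (((l - z)⁻¹) ^ (k + 2) - 2 * t * ((l - z)⁻¹) ^ (k + 1)
      + t ^ 2 * ((l - z)⁻¹) ^ k) ∂μ := by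
    apply integral_nonneg_of_ae
    filter_upwards [ae_inv_bound h hz] with l hl
    have : ((l - z)⁻¹) ^ (k + 2) - 2 * t * ((l - z)⁻¹) ^ (k + 1)
      + t ^ 2 * ((l - z)⁻¹) ^ k = ((l - z)⁻¹) ^ k * ((l - z)⁻¹ - t) ^ 2 := by ring
    rw [this]
    exact mul_nonneg (pow_nonneg hl.1.le _) (sq_nonneg _)
  have i0 := integrable_inv_pow h hz k
  have i1 := integrable_inv_pow h hz (k + 1)
  have i2 := integrable_inv_pow h hz (k + 2)
  have i3 : Integrable (fun l => ((l - z)⁻¹) ^ (k + 2) - 2 * t * ((l - z)⁻¹) ^ (k + 1)) μ :=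
    i2.sub (i1.const_mul _)
  rw [integral_add i3 (i0.const_mul _), integral_sub i2 (i1.const_mul _),
    integral_const_mul, integral_const_mul] at key
  change 0 ≤ invMom μ z (k + 2) - 2 * t * invMom μ z (k + 1) + t ^ 2 * invMom μ z k at key
  have e : t * invMom μ z k = invMom μ z (k + 1) := by rw [ht]; field_simp
  have key2 : 0 ≤ invMom μ z (k + 2) - t * invMom μ z (k + 1) := by
    have : t ^ 2 * invMom μ z k = t * invMom μ z (k + 1) := by rw [← e]; ring
    linarith
  have := mul_nonneg h0.le key2
  nlinarith

lemma Gst_hasFPowerSeriesOnBall (h : HasCompactSupp μ) (hz : z < aInf μ) :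
    HasFPowerSeriesOnBall (Gst μ)
      (FormalMultilinearSeries.ofScalars ℝ (fun n => invMom μ z (n + 1))) z
      (ENNReal.ofReal (aInf μ - z)) := by
  have hr : 0 < aInf μ - z := by linarith
  have hsum : ∀ y : ℝ, |y| < aInf μ - z →
      Summable fun n : ℕ => ∫ l, ‖((l - z)⁻¹) ^ (n + 1) * y ^ n‖ ∂μ := by
    intro y hy
    have hq : |y| * (aInf μ - z)⁻¹ < 1 := by
      rw [← div_eq_mul_inv, div_lt_one hr]; exact hy
    refine Summable.of_nonneg_of_le (fun n => integral_nonneg fun l => norm_nonneg _)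
      (fun n => ?_) ((summable_geometric_of_lt_one (by positivity) hq).mul_left (aInf μ - z)⁻¹)
    have : ∫ l, ‖((l - z)⁻¹) ^ (n + 1) * y ^ n‖ ∂μ = invMom μ z (n + 1) * |y| ^ n := by
      rw [invMom, ← integral_mul_const]
      refine integral_congr_ae ?_
      filter_upwards [ae_inv_bound h hz] with l hl
      rw [norm_mul, norm_pow, norm_pow, Real.norm_eq_abs, Real.norm_eq_abs, abs_of_pos hl.1]
    rw [this]
    calc invMom μ z (n + 1) * |y| ^ n ≤ ((aInf μ - z)⁻¹) ^ (n + 1) * |y| ^ n := by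
          gcongr; exact invMom_le h hz _
      _ = _ := by rw [mul_pow]; ring
  refine ⟨?_, by simpa using hr, ?_⟩
  · refine ENNReal.le_of_forall_nnreal_lt fun r hrr => ?_
    have hr' : (r : ℝ) < aInf μ - z := by
      rw [← ENNReal.ofReal_coe_nnreal] at hrr
      exact (ENNReal.ofReal_lt_ofReal_iff hr).1 hrr
    apply FormalMultilinearSeries.le_radius_of_bound (C := (aInf μ - z)⁻¹)
    intro n
    rw [FormalMultilinearSeries.ofScalars_norm, Real.norm_eq_abs,
      abs_of_pos (invMom_pos h hz _)]
    calc invMom μ z (n + 1) * (r : ℝ) ^ n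
        ≤ ((aInf μ - z)⁻¹) ^ (n + 1) * (aInf μ - z) ^ n := by
          gcongr; exact invMom_le h hz _
      _ = (aInf μ - z)⁻¹ := by
          rw [pow_succ, mul_assoc, mul_comm _ ((aInf μ - z) ^ n), ← mul_assoc, ← mul_pow,
            inv_mul_cancel₀ hr.ne', one_pow, one_mul]
  · intro y hy
    have hy' : |y| < aInf μ - z := by
      have : edist y 0 < ENNReal.ofReal (aInf μ - z) := hy
      rw [edist_dist, dist_zero_right, Real.norm_eq_abs] at this
      exact (ENNReal.ofReal_lt_ofReal_iff hr).1 this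
    have hs := hasSum_integral_of_summable_integral_norm
      (fun n => (integrable_inv_pow h hz (n + 1)).mul_const (y ^ n)) (hsum y hy')
    have e1 : Gst μ (z + y) = ∫ l, (∑' n : ℕ, ((l - z)⁻¹) ^ (n + 1) * y ^ n) ∂μ := by
      rw [Gst]
      refine integral_congr_ae ?_
      filter_upwards [ae_aInf_le h] with l hl
      have hlz : 0 < l - z := by linarith
      have hlt : |(l - z)⁻¹ * y| < 1 := by
        rw [abs_mul, abs_of_pos (inv_pos.2 hlz), mul_comm, ← div_eq_mul_inv, div_lt_one hlz]
        linarith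
      have : ∀ n : ℕ, ((l - z)⁻¹) ^ (n + 1) * y ^ n = (l - z)⁻¹ * ((l - z)⁻¹ * y) ^ n := by
        intro n; rw [mul_pow]; ring
      simp_rw [this]
      rw [tsum_mul_left, tsum_geometric_of_abs_lt_one hlt, ← mul_inv]
      congr 1
      field_simp
      ring
    rw [e1]
    convert hs using 2
    simp only [FormalMultilinearSeries.ofScalars_apply_eq, smul_eq_mul, invMom, integral_mul_const]

lemma Gst_analyticAt (h : HasCompactSupp μ) (hz : z < aInf μ) : AnalyticAt ℝ (Gst μ) z :=
  (Gst_hasFPowerSeriesOnBall h hz).analyticAt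

lemma iteratedDeriv_Gst (h : HasCompactSupp μ) (hz : z < aInf μ) (n : ℕ) :
    iteratedDeriv n (Gst μ) z = n.factorial * invMom μ z (n + 1) := by
  have h1 := (Gst_hasFPowerSeriesOnBall h hz).hasFPowerSeriesAt
  have h2 := (Gst_analyticAt h hz).hasFPowerSeriesAt
  have h3 := h2.eq_formalMultilinearSeries h1
  have h4 := congrFun (FormalMultilinearSeries.ofScalars_series_injective ℝ ℝ h3) n
  have : (n.factorial : ℝ) ≠ 0 := by positivity
  rw [← h4]; field_simp

lemma deriv_Gst (h : HasCompactSupp μ) (hz : z < aInf μ) : deriv (Gst μ) z = invMom μ z 2 := by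
  have := iteratedDeriv_Gst h hz 1
  rw [iteratedDeriv_one] at this
  simpa using this

lemma Gst_pos (h : HasCompactSupp μ) (hz : z < aInf μ) : 0 < Gst μ z := by
  rw [← invMom_one]; exact invMom_pos h hz 1

lemma Gst_strictMonoOn (h : HasCompactSupp μ) : StrictMonoOn (Gst μ) (Iio (aInf μ)) := by
  apply strictMonoOn_of_deriv_pos (convex_Iio _)
  · exact fun x hx => (Gst_analyticAt h hx).continuousAt.continuousWithinAt
  · intro x hx
    rw [interior_Iio] at hx
    rw [deriv_Gst h hx]
    exact invMom_pos h hx 2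

lemma Gst_tendsto_atBot (h : HasCompactSupp μ) : Tendsto (Gst μ) atBot (nhds 0) := by
  have h1 : Tendsto (fun z => (aInf μ - z)⁻¹) atBot (nhds 0) := by
    apply Tendsto.inv_tendsto_atTop
    exact tendsto_atTop_add_const_left _ _ tendsto_neg_atBot_atTop
  refine tendsto_of_tendsto_of_tendsto_of_le_of_le' tendsto_const_nhds h1 ?_ ?_
  · filter_upwards [Iio_mem_atBot (aInf μ)] with z hz using (Gst_pos h hz).le
  · filter_upwards [Iio_mem_atBot (aInf μ)] with z hz
    have := invMom_le h hz 1
    rwa [invMom_one, pow_one] at this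

lemma Gst_nonpos_of_bSup_lt (h : HasCompactSupp μ) (hz : bSup μ < z) : Gst μ z ≤ 0 := by
  rw [Gst]
  apply integral_nonpos_of_ae
  filter_upwards [ae_le_bSup h] with l hl
  exact inv_nonpos.2 (by linarith)

lemma exists_Gst_eq (h : HasCompactSupp μ) {g : ℝ} (hg : 0 < g) {y : ℝ} (hy : y < aInf μ) (hgy : g < Gst μ y) :
    ∃ z < aInf μ, Gst μ z = g := by
  obtain ⟨x, hx1, hx2⟩ := ((Gst_tendsto_atBot h).eventually (Iio_mem_nhds hg)).and
    (Iio_mem_atBot y) |>.exists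
  have hc : ContinuousOn (Gst μ) (Icc x y) := fun t ht =>
    (Gst_analyticAt h (lt_of_le_of_lt ht.2 hy)).continuousAt.continuousWithinAt
  obtain ⟨z, hz, hzg⟩ := intermediate_value_Icc (le_of_lt hx2) hc ⟨le_of_lt hx1, hgy.le⟩
  exact ⟨z, lt_of_le_of_lt hz.2 hy, hzg⟩

lemma neg_mem_Dhat_iff (h : HasCompactSupp μ) {g : ℝ} (hg : 0 < g) :
    -g ∈ Dhat μ ↔ ∃ z < aInf μ, Gst μ z = g := by
  have hb : GbInf μ ≤ 0 := by
    refine (sInf_le (mem_image_of_mem _ (show bSup μ + 1 ∈ Ioi (bSup μ) by simp))).trans ?_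
    exact_mod_cast Gst_nonpos_of_bSup_lt h (lt_add_one _)
  have hb2 : ((-g : ℝ) : EReal) < -(GbInf μ) := by
    rw [EReal.coe_neg, EReal.neg_lt_neg_iff]
    exact hb.trans_lt (by exact_mod_cast hg)
  constructor
  · rintro ⟨h1, -⟩
    rw [EReal.coe_neg, EReal.neg_lt_neg_iff] at h1
    obtain ⟨_, ⟨y, hy, rfl⟩, hlt⟩ := lt_sSup_iff.1 h1
    change (g : EReal) < (Gst μ y : EReal) at hlt
    exact exists_Gst_eq h hg hy (by exact_mod_cast hlt)
  · rintro ⟨z, hz, rfl⟩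
    refine ⟨?_, hb2⟩
    rw [EReal.coe_neg, EReal.neg_lt_neg_iff]
    obtain ⟨y, hy1, hy2⟩ := exists_between hz
    refine lt_of_lt_of_le ?_ (le_sSup (mem_image_of_mem _ (show y ∈ Iio (aInf μ) from hy2)))
    exact_mod_cast Gst_strictMonoOn h hz hy2 hy1

lemma Ginv_Gst (h : HasCompactSupp μ) (hz : z < aInf μ) : Ginv μ (Gst μ z) = z := by
  have hex : ∃ y ∈ Iio (aInf μ) ∪ Ioi (bSup μ), Gst μ y = Gst μ z := ⟨z, Or.inl hz, rfl⟩
  have h1 := Function.invFunOn_mem hex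
  have h2 := Function.invFunOn_eq hex
  change Ginv μ (Gst μ z) ∈ _ at h1
  change Gst μ (Ginv μ (Gst μ z)) = _ at h2
  rcases h1 with h1 | h1
  · exact (Gst_strictMonoOn h).injOn h1 hz h2
  · have := Gst_nonpos_of_bSup_lt h h1
    have := Gst_pos h hz
    linarith

end InvMom

/-! ### Analytic continuation and Pringsheim's principle -/

/-- The Taylor series of `f` at `x`. -/
abbrev taylorSer (f : ℝ → ℝ) (x : ℝ) : FormalMultilinearSeries ℝ ℝ ℝ :=
  FormalMultilinearSeries.ofScalars ℝ (fun n => iteratedDeriv n f x / n.factorial)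

/-- Around a point of analyticity, Taylor series at all nearby points converge on balls of a common
radius, large enough to contain the original point. -/
lemma exists_taylor_uniform {w : ℝ → ℝ} {s : ℝ} (hw : AnalyticAt ℝ w s) :
    ∃ r > 0, ∀ z, |z - s| < r →
      HasFPowerSeriesOnBall w (taylorSer w z) z (ENNReal.ofReal (2 * r)) := by
  obtain ⟨p, R, hp⟩ := hw
  obtain ⟨r, hr0, hrR⟩ : ∃ r : ℝ, 0 < r ∧ ENNReal.ofReal (3 * r) ≤ R := by
    obtain ⟨q, hq0, hqR⟩ := ENNReal.lt_iff_exists_nnreal_btwn.1 hp.r_pos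
    refine ⟨(q : ℝ) / 3, by have : 0 < q := (by exact_mod_cast hq0); positivity, ?_⟩
    rw [show 3 * ((q : ℝ) / 3) = q by ring, ENNReal.ofReal_coe_nnreal]
    exact hqR.le
  refine ⟨r, hr0, fun z hz => ?_⟩
  have hn : (‖z - s‖₊ : ENNReal) = ENNReal.ofReal |z - s| := by
    rw [← Real.norm_eq_abs, ofReal_norm]; rfl
  have h1 : (‖z - s‖₊ : ENNReal) < R := by
    rw [hn]
    refine lt_of_lt_of_le ((ENNReal.ofReal_lt_ofReal_iff (by linarith)).2 ?_) hrR
    linarith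
  have h2 := hp.changeOrigin h1
  rw [add_sub_cancel] at h2
  have h3 : taylorSer w z = p.changeOrigin (z - s) :=
    h2.analyticAt.hasFPowerSeriesAt.eq_formalMultilinearSeries h2.hasFPowerSeriesAt
  rw [h3]
  refine h2.mono (by simpa using hr0) ?_
  rw [hn]
  refine le_trans ?_ (tsub_le_tsub_right hrR _)
  rw [← ENNReal.ofReal_sub _ (abs_nonneg _)]
  exact ENNReal.ofReal_le_ofReal (by linarith)

lemma taylor_hasSum {w : ℝ → ℝ} {z r y : ℝ}
    (h : HasFPowerSeriesOnBall w (taylorSer w z) z (ENNReal.ofReal r)) (hy : |y| < r) :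
    HasSum (fun n => iteratedDeriv n w z / n.factorial * y ^ n) (w (z + y)) := by
  have hr : 0 < r := (abs_nonneg y).trans_lt hy
  have hm : y ∈ Metric.eball (0 : ℝ) (ENNReal.ofReal r) := by
    change edist y 0 < _
    rw [edist_dist, dist_zero_right, Real.norm_eq_abs]
    exact (ENNReal.ofReal_lt_ofReal_iff hr).2 hy
  have := h.hasSum hm
  simpa only [FormalMultilinearSeries.ofScalars_apply_eq, smul_eq_mul] using this

/-- A Pringsheim-type statement: `G_ρ` has no real-analytic continuation from the left of the
bottom `a_ρ` of the support to a neighbourhood of `a_ρ`, because for any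
`r > a_ρ - z > 0` its Taylor coefficients at `z` are bounded below by a positive multiple of `r⁻ⁿ`. -/
lemma not_analytic_continuation {ρ : Measure ℝ} [IsProbabilityMeasure ρ]
    (h : HasCompactSupp ρ) {f : ℝ → ℝ} (hf : AnalyticAt ℝ f (aInf ρ))
    (hfG : ∀ᶠ z in nhdsWithin (aInf ρ) (Iio (aInf ρ)), f z = Gst ρ z) : False := by
  set a := aInf ρ with ha
  obtain ⟨r, hr, hT⟩ := exists_taylor_uniform hf
  obtain ⟨z, ⟨hz1, hz2⟩, hza⟩ : ∃ z, (a - r < z ∧ f =ᶠ[nhds z] Gst ρ) ∧ z < a := by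
    have h1 : ∀ᶠ z in nhdsWithin a (Iio a), a - r < z :=
      nhdsWithin_le_nhds (Ioi_mem_nhds (by linarith))
    have h2 : ∀ᶠ z in nhdsWithin a (Iio a), f =ᶠ[nhds z] Gst ρ := by
      have := eventually_eventually_nhdsWithin.2 hfG
      filter_upwards [this, self_mem_nhdsWithin] with z hz hza
      rwa [nhdsWithin_eq_nhds.2 (Iio_mem_nhds hza)] at hz
    obtain ⟨z, hz⟩ := ((h1.and h2).and self_mem_nhdsWithin).exists
    exact ⟨z, hz⟩
  have hzr : |z - a| < r := by rw [abs_lt]; constructor <;> linarith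
  set η := a - z with hη
  have hη0 : 0 < η := by linarith
  have hηr : η < r := by linarith
  have hs2 : |r| < 2 * r := by rw [abs_of_pos hr]; linarith
  -- `(-∞, c)` has positive mass since `a < c`, and carries inverse moments of size at least `r⁻ⁿ`
  set c := z + r with hc
  have hsum := taylor_hasSum (hT z hzr) hs2
  have hco : ∀ n : ℕ, iteratedDeriv n f z / n.factorial = invMom ρ z (n + 1) := by
    intro n
    rw [hz2.iteratedDeriv_eq, iteratedDeriv_Gst h hza]
    field_simp
  simp_rw [hco] at hsum
  have hlim := hsum.summable.tendsto_atTop_zero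
  have hm : 0 < ρ.real (Iio c) := measure_Iio_pos (by linarith)
  have hlow : ∀ n : ℕ, ρ.real (Iio c) * r⁻¹ ≤ invMom ρ z (n + 1) * r ^ n := by
    intro n
    have : ρ.real (Iio c) * (r⁻¹) ^ (n + 1) ≤ invMom ρ z (n + 1) := by
      have hi : ∫ l, (Iio c).indicator (fun _ => (r⁻¹) ^ (n + 1)) l ∂ρ
          = ρ.real (Iio c) * (r⁻¹) ^ (n + 1) := by
        rw [integral_indicator_const _ measurableSet_Iio, smul_eq_mul]
      rw [← hi, invMom]
      refine integral_mono_ae ((integrable_const _).indicator measurableSet_Iio)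
        (integrable_inv_pow h hza _) ?_
      filter_upwards [ae_aInf_le h] with l hl
      by_cases hlc : l ∈ Iio c
      · rw [indicator_of_mem hlc]
        have h1 : l < c := hlc
        have h2 : 0 < l - z := by linarith
        have h3 : l - z ≤ r := by linarith
        gcongr
      · rw [indicator_of_notMem hlc]
        have h2 : 0 < l - z := by linarith
        positivity
    calc ρ.real (Iio c) * r⁻¹ = ρ.real (Iio c) * (r⁻¹) ^ (n + 1) * r ^ n := by
          rw [pow_succ, inv_pow]; field_simp
      _ ≤ _ := by gcongr
  have := ge_of_tendsto' hlim hlow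
  have : 0 < ρ.real (Iio c) * r⁻¹ := by positivity
  linarith

/-- The real-analytic inverse function theorem at a point of positive derivative. -/
lemma exists_analytic_inverse {w : ℝ → ℝ} {s : ℝ} (hw : AnalyticAt ℝ w s)
    (hd : 0 < deriv w s) : ∃ k : ℝ → ℝ, AnalyticAt ℝ k (w s) ∧ k (w s) = s ∧
      (∀ᶠ y in nhds (w s), w (k y) = y) ∧
      ∀ᶠ y in nhdsWithin (w s) (Iio (w s)), k y < s := by
  have hd' := hd.ne'
  refine ⟨hw.hasStrictDerivAt.localInverse _ _ _ hd', hw.analyticAt_localInverse hd',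
    HasStrictFDerivAt.localInverse_apply_image .., hw.hasStrictDerivAt.eventually_right_inverse hd',
    ?_⟩
  set k := hw.hasStrictDerivAt.localInverse _ _ _ hd' with hk
  have hks : k (w s) = s := HasStrictFDerivAt.localInverse_apply_image ..
  have hkd : HasDerivAt k (deriv w s)⁻¹ (w s) :=
    (hw.hasStrictDerivAt.to_localInverse hd').hasDerivAt
  have hsl := hasDerivAt_iff_tendsto_slope.1 hkd
  have hpos := hsl.eventually (Ioi_mem_nhds (inv_pos.2 hd))
  have hpos' := hpos.filter_mono (nhdsWithin_mono (w s) (fun y (hy : y < w s) => ne_of_lt hy))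
  filter_upwards [hpos', self_mem_nhdsWithin] with y hy hyw
  have hyw' : y < w s := hyw
  have : 0 < slope k (w s) y := hy
  rw [slope_def_field, hks] at this
  by_contra hcon
  have := div_nonpos_of_nonneg_of_nonpos (by linarith : 0 ≤ k y - s) (by linarith : y - w s ≤ 0)
  linarith

/-- `a_ρ` is not the value at `s` of a function `w`, analytic with positive derivative at `s`, for
which `G_ρ ∘ w` continues analytically from the left of `s`. -/
lemma not_analytic_subordination {ρ : Measure ℝ} [IsProbabilityMeasure ρ]
    (h : HasCompactSupp ρ) {w G : ℝ → ℝ} {s : ℝ} (hw : AnalyticAt ℝ w s) (hd : 0 < deriv w s)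
    (hG : AnalyticAt ℝ G s) (hs : w s = aInf ρ)
    (hGw : ∀ᶠ z in nhdsWithin s (Iio s), Gst ρ (w z) = G z) : False := by
  obtain ⟨k, hk, hks, hr, hl⟩ := exists_analytic_inverse hw hd
  have hGk : AnalyticAt ℝ (G ∘ k) (w s) := by
    apply AnalyticAt.comp _ hk
    rwa [hks]
  rw [hs] at hGk hk hr hl hks
  refine not_analytic_continuation h hGk ?_
  have ht : Tendsto k (nhdsWithin (aInf ρ) (Iio (aInf ρ))) (nhdsWithin s (Iio s)) := by
    refine tendsto_nhdsWithin_iff.2 ⟨?_, hl⟩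
    have := hk.continuousAt.tendsto
    rw [hks] at this
    exact this.mono_left nhdsWithin_le_nhds
  filter_upwards [ht.eventually hGw, hr.filter_mono nhdsWithin_le_nhds] with y h1 h2
  rw [Function.comp_apply, ← h1, h2]

lemma Ginv_analyticAt {μ : Measure ℝ} [IsProbabilityMeasure μ] (h : HasCompactSupp μ) {z : ℝ}
    (hz : z < aInf μ) : AnalyticAt ℝ (Ginv μ) (Gst μ z) := by
  have hd : 0 < deriv (Gst μ) z := by rw [deriv_Gst h hz]; exact invMom_pos h hz 2
  obtain ⟨k, hk, hks, hr, -⟩ := exists_analytic_inverse (Gst_analyticAt h hz) hd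
  refine hk.congr ?_
  have : ∀ᶠ y in nhds (Gst μ z), k y < aInf μ := by
    apply hk.continuousAt.eventually_lt_const
    rwa [hks]
  filter_upwards [hr, this] with y h1 h2
  conv_rhs => rw [← h1]
  rw [Ginv_Gst h h2]

/-- If `w = u + v` to the left of `s`, all derivatives of positive order of `u` and `v` are
nonnegative there and `w` is analytic at `s`, then `u` continues analytically across `s`: its
Taylor coefficients are dominated by those of `w`. -/
lemma exists_continuation_of_sum {u v w : ℝ → ℝ} {s : ℝ} (hu : AnalyticOnNhd ℝ u (Iio s))
    (hv : AnalyticOnNhd ℝ v (Iio s)) (hw : AnalyticAt ℝ w s)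
    (hsum : ∀ z < s, u z + v z = w z)
    (hu0 : ∀ n, ∀ z < s, 0 ≤ iteratedDeriv (n + 1) u z)
    (hv0 : ∀ n, ∀ z < s, 0 ≤ iteratedDeriv (n + 1) v z) :
    ∃ U : ℝ → ℝ, AnalyticAt ℝ U s ∧ ∀ᶠ z in nhdsWithin s (Iio s), U z = u z := by
  obtain ⟨r, hr, hT⟩ := exists_taylor_uniform hw
  -- `z` is close enough to `s` for the Taylor series of `w` at `z` to converge beyond `s`
  set z := s - r / 2 with hz
  have hzs : z < s := by linarith
  have hzr : |z - s| < r := by rw [abs_lt]; constructor <;> linarith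
  have hW := hT z hzr
  have hadd : ∀ n, iteratedDeriv n w z = iteratedDeriv n u z + iteratedDeriv n v z := by
    intro n
    have : w =ᶠ[nhds z] u + v := by
      filter_upwards [Iio_mem_nhds hzs] with y hy
      exact (hsum y hy).symm
    rw [this.iteratedDeriv_eq]
    exact iteratedDeriv_add (hu z hzs).contDiffAt (hv z hzs).contDiffAt
  have hrad : ENNReal.ofReal (2 * r) ≤ (taylorSer u z).radius := by
    refine ENNReal.le_of_forall_nnreal_lt fun t ht => ?_
    have ht' : (t : ℝ) < 2 * r := by
      rw [← ENNReal.ofReal_coe_nnreal] at ht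
      exact (ENNReal.ofReal_lt_ofReal_iff (by linarith)).1 ht
    obtain ⟨C, hC0, hC⟩ := (taylorSer w z).norm_mul_pow_le_of_lt_radius (ht.trans_le hW.r_le)
    apply FormalMultilinearSeries.le_radius_of_bound (C := max C |u z|)
    intro n
    rcases n with _ | n
    · simp
    · refine le_trans ?_ ((hC (n + 1)).trans (le_max_left _ _))
      have h1 := hu0 n z hzs
      have h2 := hv0 n z hzs
      rw [FormalMultilinearSeries.ofScalars_norm, FormalMultilinearSeries.ofScalars_norm,
        Real.norm_eq_abs, Real.norm_eq_abs, hadd, abs_of_nonneg (by positivity),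
        abs_of_nonneg (by positivity)]
      gcongr
      linarith
  have hpos : 0 < (taylorSer u z).radius := lt_of_lt_of_le (by simpa using hr) hrad
  set U : ℝ → ℝ := fun y => (taylorSer u z).sum (y - z) with hU
  have hUP : HasFPowerSeriesOnBall U (taylorSer u z) z (ENNReal.ofReal (2 * r)) := by
    have := ((taylorSer u z).hasFPowerSeriesOnBall hpos).comp_sub z
    rw [zero_add] at this
    exact this.mono (by simpa using hr) hrad
  have hUan : AnalyticOnNhd ℝ U (Ioo (z - 2 * r) (z + 2 * r)) := by
    refine hUP.analyticOnNhd.mono fun y hy => ?_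
    rw [Metric.mem_eball, edist_dist, Real.dist_eq]
    refine (ENNReal.ofReal_lt_ofReal_iff (by linarith)).2 ?_
    rw [abs_lt]; constructor <;> linarith [hy.1, hy.2]
  refine ⟨U, hUan s ⟨by linarith, by linarith⟩, ?_⟩
  have hEq : EqOn U u (Ioo (z - 2 * r) s) := by
    refine AnalyticOnNhd.eqOn_of_preconnected_of_eventuallyEq (z₀ := z)
      (hUan.mono (Ioo_subset_Ioo le_rfl (by linarith))) (hu.mono Ioo_subset_Iio_self)
      isPreconnected_Ioo ⟨by linarith, hzs⟩ ?_
    obtain ⟨q, hq⟩ := (hu z hzs).hasFPowerSeriesAt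
    have hmin : 0 < min q (ENNReal.ofReal (2 * r)) := lt_min hq.r_pos hUP.r_pos
    filter_upwards [Metric.eball_mem_nhds z hmin] with y hy
    exact (hUP.mono hmin (min_le_right _ _)).unique (hq.mono hmin (min_le_left _ _)) hy
  filter_upwards [Ioo_mem_nhdsLT (show z - 2 * r < s by linarith)] with y hy using hEq hy

/-! ### Kaluza's theorem and absolute monotonicity -/

/-- Kaluza's theorem: if `(c n)` is positive and log-convex, then all coefficients of positive index
of the reciprocal power series `1 / ∑ c n xⁿ = ∑ d n xⁿ` are nonpositive. -/
lemma kaluza {c d : ℕ → ℝ} (hc : ∀ n, 0 < c n) (hlc : ∀ n, c (n + 1) ^ 2 ≤ c n * c (n + 2))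
    (h0 : 0 < d 0)
    (hd : ∀ n, ∑ j ∈ Finset.range (n + 2), d j * c (n + 1 - j) = 0) (n : ℕ) :
    d (n + 1) ≤ 0 := by
  have hratio : Monotone fun n => c (n + 1) / c n := by
    refine monotone_nat_of_le_succ fun n => ?_
    rw [div_le_div_iff₀ (hc _) (hc _)]
    have := hlc n
    nlinarith
  induction n using Nat.strong_induction_on with
  | _ n ih =>
    rcases n with _ | n
    · have := hd 0
      simp [Finset.sum_range_succ] at this
      have h1 := mul_pos h0 (hc 1)
      have h2 : d 1 * c 0 < 0 := by linarith
      exact (neg_of_mul_neg_left h2 (hc 0).le).le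
    -- `c (n + 1)` times the relation of index `n + 2` minus `c (n + 2)` times that of index `n + 1`
    -- eliminates `d 0`
    · have s1 := hd n
      have s2 := hd (n + 1)
      rw [Finset.sum_range_succ'] at s1
      rw [Finset.sum_range_succ, Finset.sum_range_succ'] at s2
      simp only [Nat.sub_zero, Nat.sub_self, Nat.add_sub_add_right] at s1 s2
      have key : 0 ≤ c (n + 1) * (∑ k ∈ Finset.range (n + 1), d (k + 1) * c (n + 1 - k))
          - c (n + 2) * ∑ k ∈ Finset.range (n + 1), d (k + 1) * c (n - k) := by
        rw [Finset.mul_sum, Finset.mul_sum, ← Finset.sum_sub_distrib]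
        refine Finset.sum_nonneg fun k hk => ?_
        have hk' : k < n + 1 := Finset.mem_range.1 hk
        have h1 := ih k hk'
        have h2 : c (n - k + 1) / c (n - k) ≤ c (n + 1 + 1) / c (n + 1) :=
          hratio (show n - k ≤ n + 1 by omega)
        rw [div_le_div_iff₀ (hc _) (hc _)] at h2
        rw [show n + 1 - k = n - k + 1 by omega]
        nlinarith
      have e1 : c (n + 1) * (∑ k ∈ Finset.range (n + 1), d (k + 1) * c (n + 1 - k))
          - c (n + 2) * ∑ k ∈ Finset.range (n + 1), d (k + 1) * c (n - k)
          = -(c (n + 1) * c 0 * d (n + 2)) := by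
        linear_combination c (n + 1) * s2 - c (n + 2) * s1
      have hp := mul_pos (hc (n + 1)) (hc 0)
      by_contra hcon
      have := mul_pos hp (not_le.1 hcon)
      change 0 < c (n + 1) * c 0 * d (n + 2) at this
      linarith

/-- `f` and its first `n` derivatives are nonnegative on `s`. -/
def AbsMono : ℕ → (ℝ → ℝ) → Set ℝ → Prop
  | 0, f, s => ∀ x ∈ s, 0 ≤ f x
  | n + 1, f, s => (∀ x ∈ s, 0 ≤ f x) ∧ AbsMono n (deriv f) s

namespace AbsMono

variable {n : ℕ} {f g : ℝ → ℝ} {s t : Set ℝ}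

lemma nonneg (h : AbsMono n f s) : ∀ x ∈ s, 0 ≤ f x := by
  cases n with
  | zero => exact h
  | succ n => exact h.1

lemma of_succ (h : AbsMono (n + 1) f s) : AbsMono n f s := by
  induction n generalizing f with
  | zero => exact h.1
  | succ n ih => exact ⟨h.1, ih h.2⟩

lemma congr (hs : IsOpen s) (hfg : EqOn f g s) (h : AbsMono n f s) : AbsMono n g s := by
  induction n generalizing f g with
  | zero => exact fun x hx => (hfg hx) ▸ h x hx
  | succ n ih =>
    refine ⟨fun x hx => (hfg hx) ▸ h.1 x hx, ih (fun x hx => ?_) h.2⟩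
    exact (hfg.eventuallyEq_of_mem (hs.mem_nhds hx)).deriv_eq

lemma iff_iteratedDeriv : AbsMono n f s ↔ ∀ k ≤ n, ∀ x ∈ s, 0 ≤ iteratedDeriv k f x := by
  induction n generalizing f with
  | zero => simp [AbsMono]
  | succ n ih =>
    rw [AbsMono, ih]
    constructor
    · rintro ⟨h1, h2⟩ k hk
      rcases k with _ | k
      · simpa using h1
      · rw [iteratedDeriv_succ']
        exact h2 k (by omega)
    · intro h
      refine ⟨by simpa using h 0 (by omega), fun k hk => ?_⟩
      rw [← iteratedDeriv_succ']
      exact h (k + 1) (by omega)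

lemma one_add (h : AbsMono n f s) : AbsMono n (fun x => 1 + f x) s := by
  cases n with
  | zero => exact fun x hx => add_nonneg zero_le_one (h x hx)
  | succ n =>
    refine ⟨fun x hx => add_nonneg zero_le_one (h.1 x hx), ?_⟩
    have : deriv (fun x => 1 + f x) = deriv f := by ext x; exact deriv_const_add _
    rw [this]
    exact h.2

lemma add (hs : IsOpen s) (hf : AnalyticOnNhd ℝ f s) (hg : AnalyticOnNhd ℝ g s)
    (h1 : AbsMono n f s) (h2 : AbsMono n g s) : AbsMono n (f + g) s := by
  induction n generalizing f g with
  | zero => exact fun x hx => add_nonneg (h1 x hx) (h2 x hx)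
  | succ n ih =>
    refine ⟨fun x hx => add_nonneg (h1.1 x hx) (h2.1 x hx), ?_⟩
    refine congr hs (fun x hx => ?_) (ih hf.deriv hg.deriv h1.2 h2.2)
    exact (deriv_add (hf x hx).differentiableAt (hg x hx).differentiableAt).symm

lemma mul (hs : IsOpen s) (hf : AnalyticOnNhd ℝ f s) (hg : AnalyticOnNhd ℝ g s)
    (h1 : AbsMono n f s) (h2 : AbsMono n g s) : AbsMono n (f * g) s := by
  induction n generalizing f g with
  | zero => exact fun x hx => mul_nonneg (h1 x hx) (h2 x hx)
  | succ n ih =>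
    refine ⟨fun x hx => mul_nonneg (h1.1 x hx) (h2.1 x hx), ?_⟩
    refine congr hs (fun x hx => ?_) (add hs (hf.deriv.mul hg) (hf.mul hg.deriv)
      (ih hf.deriv hg h1.2 h2.of_succ) (ih hf hg.deriv h1.of_succ h2.2))
    exact (deriv_mul (hf x hx).differentiableAt (hg x hx).differentiableAt).symm

/-- One order is gained: `f ∘ w` is as good as a primitive of `deriv w`. -/
lemma comp {w : ℝ → ℝ} (hs : IsOpen s) (hf : AnalyticOnNhd ℝ f t) (hw : AnalyticOnNhd ℝ w s)
    (hst : MapsTo w s t) (h1 : ∀ m, AbsMono m f t) (h2 : AbsMono n (deriv w) s) :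
    AbsMono (n + 1) (f ∘ w) s := by
  induction n generalizing f with
  | zero =>
    refine ⟨fun x hx => (h1 0) _ (hst hx), fun x hx => ?_⟩
    rw [deriv_comp x (hf _ (hst hx)).differentiableAt (hw x hx).differentiableAt]
    exact mul_nonneg ((h1 1).2 _ (hst hx)) (h2 x hx)
  | succ n ih =>
    refine ⟨fun x hx => (h1 0) _ (hst hx), ?_⟩
    refine congr hs (fun x hx => ?_) (mul hs (hf.deriv.comp hw hst) hw.deriv
      (ih hf.deriv (fun m => (h1 (m + 1)).2) h2.of_succ) h2)
    exact (deriv_comp x (hf _ (hst hx)).differentiableAt (hw x hx).differentiableAt).symm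

lemma inv_one_sub (hs : IsOpen s) (hf : AnalyticOnNhd ℝ f s) (hf1 : ∀ x ∈ s, f x < 1)
    (h : AbsMono n f s) : AbsMono n (fun x => (1 - f x)⁻¹) s := by
  have hne : ∀ x ∈ s, 1 - f x ≠ 0 := fun x hx => by linarith [hf1 x hx]
  have han : AnalyticOnNhd ℝ (fun x => (1 - f x)⁻¹) s :=
    (analyticOnNhd_const.sub hf).inv hne
  induction n with
  | zero => exact fun x hx => inv_nonneg.2 (by linarith [hf1 x hx])
  | succ n ih =>
    refine ⟨fun x hx => inv_nonneg.2 (by linarith [hf1 x hx]), ?_⟩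
    have hi := ih h.of_succ
    refine congr hs (fun x hx => ?_) (mul hs hf.deriv (han.mul han) h.2 (mul hs han han hi hi))
    have h1 : HasDerivAt (fun x => 1 - f x) (-deriv f x) x :=
      (hf x hx).differentiableAt.hasDerivAt.const_sub 1
    rw [(h1.fun_inv (hne x hx)).deriv]
    have := hne x hx
    simp only [Pi.mul_apply]
    field_simp

end AbsMono

/-- `h_μ(w) = -1/G_μ(w) - w`, so that the subordination functions satisfy
`ω_ν(z) = z + h_μ(ω_μ(z))` and `ω_μ(z) = z + h_ν(ω_ν(z))`. -/
def hfun (μ : Measure ℝ) (w : ℝ) : ℝ := -(Gst μ w)⁻¹ - w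

lemma hfun_analyticOnNhd {μ : Measure ℝ} [IsProbabilityMeasure μ] (h : HasCompactSupp μ) :
    AnalyticOnNhd ℝ (hfun μ) (Iio (aInf μ)) := fun _ hz =>
  (((Gst_analyticAt h hz).inv (Gst_pos h hz).ne').neg).sub analyticAt_id

/-- The derivative of `h_μ` is absolutely monotone: in order zero this is the Cauchy-Schwarz
inequality `G_μ² ≤ G_μ'`, in higher orders it is Kaluza's theorem applied to the Taylor
coefficients of `G_μ`. -/
lemma absMono_deriv_hfun {μ : Measure ℝ} [IsProbabilityMeasure μ] (h : HasCompactSupp μ) (n : ℕ) :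
    AbsMono n (deriv (hfun μ)) (Iio (aInf μ)) := by
  rw [AbsMono.iff_iteratedDeriv]
  intro k _ z hz
  have hz : z < aInf μ := hz
  have hG := Gst_analyticAt h hz
  have hp := Gst_pos h hz
  have hI : AnalyticAt ℝ (fun w => (Gst μ w)⁻¹) z := hG.fun_inv hp.ne'
  rcases k with _ | k
  · have h1 : HasDerivAt (hfun μ) (-(-(deriv (Gst μ) z) / Gst μ z ^ 2) - 1) z :=
      ((hG.differentiableAt.hasDerivAt.fun_inv hp.ne').fun_neg).fun_sub (hasDerivAt_id z)
    rw [iteratedDeriv_zero, h1.deriv, deriv_Gst h hz]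
    have h2 := invMom_logConvex h hz 0
    rw [invMom_zero, invMom_one, one_mul] at h2
    have h3 : 1 ≤ invMom μ z (0 + 2) / Gst μ z ^ 2 := by
      rw [le_div_iff₀ (by positivity)]; linarith
    rw [neg_div, neg_neg]
    simpa using h3
  · rw [← iteratedDeriv_succ']
    have e1 : iteratedDeriv (k + 1 + 1) (hfun μ) z
        = -iteratedDeriv (k + 1 + 1) (fun w => (Gst μ w)⁻¹) z := by
      have : hfun μ = -(fun w => (Gst μ w)⁻¹) - id := rfl
      rw [this, iteratedDeriv_sub hI.neg.contDiffAt contDiffAt_id, iteratedDeriv_neg,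
        iteratedDeriv_id]
      simp
    rw [e1, neg_nonneg]
    have hk := kaluza (c := fun n => invMom μ z (n + 1))
      (d := fun n => iteratedDeriv n (fun w => (Gst μ w)⁻¹) z / n.factorial)
      (fun n => invMom_pos h hz _) (fun n => invMom_logConvex h hz _)
      (by simpa using hp) (fun n => ?_) (k + 1)
    · have hf : (0 : ℝ) < ((k + 1 + 1).factorial : ℝ) := by positivity
      by_contra hcon
      have := div_pos (not_le.1 hcon) hf
      linarith
    -- the Leibniz rule for `G⁻¹ * G = 1` is the convolution identity that `kaluza` requires
    · have hone : (fun w => (Gst μ w)⁻¹) * Gst μ =ᶠ[nhds z] fun _ => 1 := by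
        filter_upwards [Iio_mem_nhds hz] with w hw
        exact inv_mul_cancel₀ (Gst_pos h hw).ne'
      have h1 := hone.iteratedDeriv_eq (n + 1)
      rw [iteratedDeriv_mul hI.contDiffAt hG.contDiffAt, iteratedDeriv_const] at h1
      simp only [Nat.succ_ne_zero, if_false] at h1
      have hfac : ((n + 1).factorial : ℝ) ≠ 0 := by positivity
      apply mul_left_cancel₀ hfac
      rw [mul_zero, ← h1, Finset.mul_sum]
      refine Finset.sum_congr rfl fun j hj => ?_
      have hj' : j ≤ n + 1 := by have := Finset.mem_range.1 hj; omega
      rw [iteratedDeriv_Gst h hz, ← Nat.choose_mul_factorial_mul_factorial hj']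
      push_cast
      have : (j.factorial : ℝ) ≠ 0 := by positivity
      field_simp

/-- Inductive step for `absMono_deriv_subordination`, for one of the two functions: if
`u = z + k(v)` and `v = z + h(u)`, then `v' = (1 + h'(u)) / (1 - h'(u) k'(v))`. -/
lemma absMono_deriv_step {s tu tv : Set ℝ} {u v h k : ℝ → ℝ} (hs : IsOpen s)
    (hu : AnalyticOnNhd ℝ u s) (hv : AnalyticOnNhd ℝ v s) (hh : AnalyticOnNhd ℝ h tu)
    (hk : AnalyticOnNhd ℝ k tv) (hut : MapsTo u s tu) (hvt : MapsTo v s tv)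
    (hh' : ∀ n, AbsMono n (deriv h) tu) (hk' : ∀ n, AbsMono n (deriv k) tv)
    (e1 : ∀ z ∈ s, u z = z + k (v z)) (e2 : ∀ z ∈ s, v z = z + h (u z))
    (hv0 : ∀ z ∈ s, 0 < deriv v z) {n : ℕ} (iu : AbsMono n (deriv u) s)
    (iv : AbsMono n (deriv v) s) : AbsMono (n + 1) (deriv v) s := by
  have d1 : ∀ z ∈ s, deriv u z = 1 + deriv k (v z) * deriv v z := by
    intro z hz
    have : u =ᶠ[nhds z] fun z => z + k (v z) := by
      filter_upwards [hs.mem_nhds hz] with y hy using e1 y hy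
    rw [this.deriv_eq]
    exact ((hasDerivAt_id z).fun_add ((hk _ (hvt hz)).differentiableAt.hasDerivAt.comp z
      (hv z hz).differentiableAt.hasDerivAt)).deriv
  have d2 : ∀ z ∈ s, deriv v z = 1 + deriv h (u z) * deriv u z := by
    intro z hz
    have : v =ᶠ[nhds z] fun z => z + h (u z) := by
      filter_upwards [hs.mem_nhds hz] with y hy using e2 y hy
    rw [this.deriv_eq]
    exact ((hasDerivAt_id z).fun_add ((hh _ (hut hz)).differentiableAt.hasDerivAt.comp z
      (hu z hz).differentiableAt.hasDerivAt)).deriv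
  set P : ℝ → ℝ := (deriv h ∘ u) * (deriv k ∘ v) with hP
  have ah : AnalyticOnNhd ℝ (deriv h ∘ u) s := hh.deriv.comp hu hut
  have ak : AnalyticOnNhd ℝ (deriv k ∘ v) s := hk.deriv.comp hv hvt
  have e3 : ∀ z ∈ s, deriv v z * (1 - P z) = 1 + deriv h (u z) := by
    intro z hz
    have h1 := d1 z hz
    have h2 := d2 z hz
    simp only [hP, Pi.mul_apply, Function.comp_apply]
    rw [h1] at h2
    linear_combination h2
  -- positivity of `v'` keeps the denominator `1 - P` away from zero
  have hP1 : ∀ z ∈ s, P z < 1 := by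
    intro z hz
    have h0 := (hh' 0) _ (hut hz)
    have : 0 < deriv v z * (1 - P z) := by rw [e3 z hz]; linarith
    have := (pos_iff_pos_of_mul_pos this).1 (hv0 z hz)
    linarith
  have mh : AbsMono (n + 1) (deriv h ∘ u) s := AbsMono.comp hs hh.deriv hu hut hh' iu
  have mk : AbsMono (n + 1) (deriv k ∘ v) s := AbsMono.comp hs hk.deriv hv hvt hk' iv
  have mP : AbsMono (n + 1) P s := AbsMono.mul hs ah ak mh mk
  have aQ : AnalyticOnNhd ℝ (fun z => (1 - P z)⁻¹) s :=
    (analyticOnNhd_const.sub (ah.mul ak)).inv fun z hz => (sub_pos.2 (hP1 z hz)).ne'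
  refine AbsMono.congr hs (fun z hz => ?_) (AbsMono.mul hs (analyticOnNhd_const.add ah) aQ
    mh.one_add (mP.inv_one_sub hs (ah.mul ak) hP1))
  change (1 + deriv h (u z)) * (1 - P z)⁻¹ = deriv v z
  rw [← e3 z hz]
  have : 1 - P z ≠ 0 := by linarith [hP1 z hz]
  field_simp

/-- Solutions of the system `u = z + k(v)`, `v = z + h(u)` with `h'`, `k'` absolutely monotone and
`u`, `v` increasing have absolutely monotone derivatives. -/
lemma absMono_deriv_subordination {s tu tv : Set ℝ} {u v h k : ℝ → ℝ} (hs : IsOpen s)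
    (hu : AnalyticOnNhd ℝ u s) (hv : AnalyticOnNhd ℝ v s) (hh : AnalyticOnNhd ℝ h tu)
    (hk : AnalyticOnNhd ℝ k tv) (hut : MapsTo u s tu) (hvt : MapsTo v s tv)
    (hh' : ∀ n, AbsMono n (deriv h) tu) (hk' : ∀ n, AbsMono n (deriv k) tv)
    (e1 : ∀ z ∈ s, u z = z + k (v z)) (e2 : ∀ z ∈ s, v z = z + h (u z))
    (hu0 : ∀ z ∈ s, 0 < deriv u z) (hv0 : ∀ z ∈ s, 0 < deriv v z) (n : ℕ) :
    AbsMono n (deriv u) s ∧ AbsMono n (deriv v) s := by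
  induction n with
  | zero => exact ⟨fun z hz => (hu0 z hz).le, fun z hz => (hv0 z hz).le⟩
  | succ n ih =>
    exact ⟨absMono_deriv_step hs hv hu hk hh hvt hut hk' hh' e2 e1 hu0 ih.2 ih.1,
      absMono_deriv_step hs hu hv hh hk hut hvt hh' hk' e1 e2 hv0 ih.1 ih.2⟩

/-! ### The function `F̂` and subordination -/

section Main

lemma Fhat_eq (μ ν : Measure ℝ) (h : ℝ) : Fhat μ ν h = Ginv μ (Gst ν h) + (Gst ν h)⁻¹ + h := by
  rw [Fhat, Rhat, neg_neg, inv_neg, sub_neg_eq_add]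

variable {μ ν ρ : Measure ℝ} [IsProbabilityMeasure ν]

/-- Near `-∞` the defining relation of `ρ` reads `G_ρ(F̂(h)) = G_ν(h)`: the function `F̂` is the
inverse of the subordination function of `ν`. -/
lemma exists_subordination_atBot (hcν : HasCompactSupp ν)
    (hρ : IsFreeAdd μ ν ρ) : ∀ᶠ h in atBot,
      h ∈ FhatDom μ ν ∧ Fhat μ ν h < aInf ρ ∧ Gst ρ (Fhat μ ν h) = Gst ν h := by
  obtain ⟨hp, hcρ, ε, hε, H⟩ := hρ
  filter_upwards [(Gst_tendsto_atBot hcν).eventually (Iio_mem_nhds hε),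
    Iio_mem_atBot (aInf ν)] with h h1 h2
  have h1 : Gst ν h < ε := h1
  have h2 : h < aInf ν := h2
  have hg := Gst_pos hcν h2
  obtain ⟨hDρ, hDμ, -, hR⟩ := H (-Gst ν h) ⟨by linarith, by linarith⟩ (by linarith)
  obtain ⟨z, hz, hzg⟩ := (neg_mem_Dhat_iff hcρ hg).1 hDρ
  have hF : Fhat μ ν h = z := by
    rw [Rhat, Rhat, Rhat, neg_neg, inv_neg, Ginv_Gst hcν h2, ← hzg, Ginv_Gst hcρ hz, hzg] at hR
    rw [Fhat_eq]
    linarith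
  rw [hF]
  exact ⟨⟨h2, hDμ⟩, hz, hzg⟩

lemma Fhat_tendsto_atBot (hcν : HasCompactSupp ν)
    (hρ : IsFreeAdd μ ν ρ) : Tendsto (Fhat μ ν) atBot atBot := by
  have hS := exists_subordination_atBot hcν hρ
  obtain ⟨hp, hcρ, -⟩ := hρ
  rw [tendsto_atBot]
  intro M
  have hm : min M (aInf ρ) - 1 < aInf ρ := by linarith [min_le_right M (aInf ρ)]
  filter_upwards [hS, (Gst_tendsto_atBot hcν).eventually (Iio_mem_nhds (Gst_pos hcρ hm))]
    with h h1 h2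
  have h2 : Gst ν h < _ := h2
  rw [← h1.2.2, (Gst_strictMonoOn hcρ).lt_iff_lt h1.2.1 hm] at h2
  linarith [min_le_left M (aInf ρ)]

variable [IsProbabilityMeasure μ]

lemma mem_FhatDom (hcμ : HasCompactSupp μ) (hcν : HasCompactSupp ν) {h : ℝ} :
    h ∈ FhatDom μ ν ↔ h < aInf ν ∧ ∃ z < aInf μ, Gst μ z = Gst ν h := by
  refine and_congr_right fun hh => ?_
  exact neg_mem_Dhat_iff hcμ (Gst_pos hcν hh)

lemma Fhat_analyticAt (hcμ : HasCompactSupp μ) (hcν : HasCompactSupp ν) {h : ℝ}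
    (hh : h ∈ FhatDom μ ν) : AnalyticAt ℝ (Fhat μ ν) h := by
  obtain ⟨h1, z, hz, hzg⟩ := (mem_FhatDom hcμ hcν).1 hh
  have hG := Gst_analyticAt hcν h1
  have hi : AnalyticAt ℝ (Ginv μ) (Gst ν h) := hzg ▸ Ginv_analyticAt hcμ hz
  have h2 : AnalyticAt ℝ (fun h => Ginv μ (Gst ν h) + (Gst ν h)⁻¹ + h) h :=
    ((hi.comp hG).fun_add (hG.fun_inv (Gst_pos hcν h1).ne')).fun_add analyticAt_id
  exact h2.congr (Eventually.of_forall fun x => (Fhat_eq _ _ x).symm)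

lemma FhatDom_mono (hcμ : HasCompactSupp μ) (hcν : HasCompactSupp ν) {h k : ℝ}
    (hh : h ∈ FhatDom μ ν) (hk : k ≤ h) : k ∈ FhatDom μ ν := by
  rcases hk.eq_or_lt with rfl | hk
  · exact hh
  obtain ⟨h1, z, hz, hzg⟩ := (mem_FhatDom hcμ hcν).1 hh
  refine (mem_FhatDom hcμ hcν).2 ⟨hk.trans h1, ?_⟩
  refine exists_Gst_eq hcμ (Gst_pos hcν (hk.trans h1)) hz ?_
  rw [hzg]
  exact Gst_strictMonoOn hcν (hk.trans h1) h1 hk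

/-- `G_ρ ∘ F̂ = G_ν` persists on every interval reaching `-∞` that `F̂` maps below `a_ρ`. -/
lemma subordination_eqOn (hcμ : HasCompactSupp μ) (hcν : HasCompactSupp ν)
    (hρ : IsFreeAdd μ ν ρ) {U : Set ℝ} (hU : IsPreconnected U) (hUd : U ⊆ FhatDom μ ν)
    (hbot : U ∈ (atBot : Filter ℝ)) (hmap : ∀ h ∈ U, Fhat μ ν h < aInf ρ) :
    ∀ h ∈ U, Gst ρ (Fhat μ ν h) = Gst ν h := by
  have hS := exists_subordination_atBot hcν hρ
  obtain ⟨hp, hcρ, -⟩ := hρ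
  have hA : AnalyticOnNhd ℝ (fun h => Gst ρ (Fhat μ ν h)) U := fun h hh =>
    (Gst_analyticAt hcρ (hmap h hh)).comp (Fhat_analyticAt hcμ hcν (hUd hh))
  have hB : AnalyticOnNhd ℝ (Gst ν) U := fun h hh => Gst_analyticAt hcν (hUd hh).1
  obtain ⟨c, hc⟩ := eventually_atBot.1 (hS.and hbot)
  refine hA.eqOn_of_preconnected_of_eventuallyEq hB hU (hc (c - 1) (by linarith)).2 ?_
  filter_upwards [Iio_mem_nhds (show c - 1 < c by linarith)] with y hy
  exact (hc y (le_of_lt hy)).1.2.2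

lemma StrictConcaveOn.lt_of_lt_of_lt {s : Set ℝ} {f : ℝ → ℝ} (hf : StrictConcaveOn ℝ s f)
    {t x y : ℝ} (ht : t ∈ s) (hy : y ∈ s) (htx : t < x) (hxy : x < y) (hfxy : f x < f y) :
    f t < f x := by
  have h1 := hf.slope_anti_adjacent ht hy htx hxy
  have h2 : 0 < (f y - f x) / (y - x) := div_pos (by linarith) (by linarith)
  have h3 : 0 < (f x - f t) / (x - t) := h2.trans h1
  have := (div_pos_iff_of_pos_right (by linarith)).1 h3
  linarith

lemma StrictConcaveOn.deriv_pos_of_lt {s : Set ℝ} {f : ℝ → ℝ} (hf : StrictConcaveOn ℝ s f)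
    {x y : ℝ} (hx : x ∈ s) (hy : y ∈ s) (hxy : x < y) (hfxy : f x < f y)
    (hd : DifferentiableAt ℝ f x) : 0 < deriv f x := by
  refine lt_of_lt_of_le ?_ (hf.concaveOn.slope_le_deriv hx hy hxy hd)
  rw [slope_def_field]
  exact div_pos (by linarith) (by linarith)

/-- As `F̂ → -∞` at `-∞`, it takes somewhere a smaller value than at a fixed `k` to the right;
concavity then makes it increasing to the left of that point. -/
lemma Hhat_nonempty (hcμ : HasCompactSupp μ) (hcν : HasCompactSupp ν) (hρ : IsFreeAdd μ ν ρ)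
    (hconc : StrictConcaveOn ℝ (FhatDom μ ν) (Fhat μ ν)) : (Hhat μ ν).Nonempty := by
  obtain ⟨k, hk⟩ := (exists_subordination_atBot hcν hρ).exists
  obtain ⟨h, h1, h2⟩ := (((Fhat_tendsto_atBot hcν hρ).eventually
    (Iio_mem_atBot (Fhat μ ν k))).and (Iio_mem_atBot k)).exists
  have h1 : Fhat μ ν h < Fhat μ ν k := h1
  have h2 : h < k := h2
  refine ⟨h, FhatDom_mono hcμ hcν hk.1 h2.le, fun t ht hth => ?_⟩
  have := hconc.lt_of_lt_of_lt ht hk.1 hth h2 h1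
  exact hconc.deriv_pos_of_lt ht hk.1 (hth.trans h2) (this.trans h1)
    (Fhat_analyticAt hcμ hcν ht).differentiableAt

/-- If `F̂` exceeded `a_ρ`, it would cross the value `a_ρ` increasingly, and `G_ρ` would
continue analytically across `a_ρ`. -/
lemma Fhat_le_aInf (hcμ : HasCompactSupp μ) (hcν : HasCompactSupp ν) (hρ : IsFreeAdd μ ν ρ)
    (hconc : StrictConcaveOn ℝ (FhatDom μ ν) (Fhat μ ν)) {k : ℝ} (hk : k ∈ FhatDom μ ν) :
    Fhat μ ν k ≤ aInf ρ := by
  by_contra! hcon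
  obtain ⟨c, hc1, hc2⟩ := (((Fhat_tendsto_atBot hcν hρ).eventually
    (Iio_mem_atBot (aInf ρ))).and (Iio_mem_atBot k)).exists
  have hc1 : Fhat μ ν c < aInf ρ := hc1
  have hc2 : c < k := hc2
  have hcont : ContinuousOn (Fhat μ ν) (Icc c k) := fun t ht =>
    (Fhat_analyticAt hcμ hcν (FhatDom_mono hcμ hcν hk ht.2)).continuousAt.continuousWithinAt
  obtain ⟨s, hs, hFs⟩ := intermediate_value_Icc hc2.le hcont ⟨hc1.le, hcon.le⟩
  have hsk : s < k := hs.2.lt_of_ne (by rintro rfl; exact hcon.ne' hFs)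
  have hsd := FhatDom_mono hcμ hcν hk hsk.le
  have hlt : Fhat μ ν s < Fhat μ ν k := hFs ▸ hcon
  have hEq := subordination_eqOn hcμ hcν hρ (U := Iio s) isPreconnected_Iio
    (fun t ht => FhatDom_mono hcμ hcν hsd (le_of_lt ht)) (Iio_mem_atBot s)
    (fun t ht => hFs ▸ hconc.lt_of_lt_of_lt
      (FhatDom_mono hcμ hcν hsd (le_of_lt ht)) hk ht hsk hlt)
  obtain ⟨hp, hcρ, -⟩ := hρ
  have hA := Fhat_analyticAt hcμ hcν hsd
  exact not_analytic_subordination hcρ hA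
    (hconc.deriv_pos_of_lt hsd hk hsk hlt hA.differentiableAt)
    (Gst_analyticAt hcν hsd.1) hFs (eventually_mem_nhdsWithin.mono hEq)

/-- If `u` is increasing and convex to the left of `s` and bounded by `a`, its analytic continuation
`U` to `s` has `U s = lim u ≤ a` and positive derivative at `s`. -/
lemma continuation_props {u U : ℝ → ℝ} {s a : ℝ} (hu : AnalyticOnNhd ℝ u (Iio s))
    (hu1 : ∀ z < s, 0 < deriv u z) (hu2 : ∀ z < s, 0 ≤ deriv (deriv u) z)
    (hua : ∀ z < s, u z < a)
    (hU : AnalyticAt ℝ U s) (hUu : ∀ᶠ z in nhdsWithin s (Iio s), U z = u z) :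
    Tendsto u (nhdsWithin s (Iio s)) (nhds (U s)) ∧ 0 < deriv U s ∧ U s ≤ a := by
  have hlim : Tendsto u (nhdsWithin s (Iio s)) (nhds (U s)) :=
    (hU.continuousAt.tendsto.mono_left nhdsWithin_le_nhds).congr' hUu
  refine ⟨hlim, ?_, le_of_tendsto hlim (eventually_mem_nhdsWithin.mono fun z hz => (hua z hz).le)⟩
  have hmono : MonotoneOn (deriv u) (Iio s) := by
    refine monotoneOn_of_deriv_nonneg (convex_Iio s)
      (fun z hz => (hu z hz).deriv.continuousAt.continuousWithinAt) ?_ ?_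
    · rw [interior_Iio]
      exact fun z hz => (hu z hz).deriv.differentiableAt.differentiableWithinAt
    · rw [interior_Iio]; exact hu2
  have hd : Tendsto (deriv U) (nhdsWithin s (Iio s)) (nhds (deriv U s)) :=
    hU.deriv.continuousAt.tendsto.mono_left nhdsWithin_le_nhds
  refine (hu1 (s - 1) (by linarith)).trans_le (ge_of_tendsto hd ?_)
  have h1 : ∀ᶠ z in nhdsWithin s (Iio s), z ∈ Ioo (s - 1) s :=
    Ioo_mem_nhdsLT (by linarith)
  filter_upwards [eventually_eventually_nhdsWithin.2 hUu, h1] with z hz hz1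
  rw [(isOpen_Iio.nhdsWithin_eq hz1.2) ] at hz
  rw [EventuallyEq.deriv_eq hz]
  exact hmono (show s - 1 < s by linarith) hz1.2 hz1.1.le

end Main

/-! ### The supremum of `F̂` -/

section Final

variable {μ ν ρ : Measure ℝ} [IsProbabilityMeasure μ] [IsProbabilityMeasure ν]
  [IsProbabilityMeasure ρ]

/-- The subordination function `u = G_μ^⟨-1⟩ ∘ G_ρ`, where defined, is analytic and increasing. -/
lemma subordination_analytic (hcμ : HasCompactSupp μ) (hcρ : HasCompactSupp ρ) {s : ℝ}
    (hs : s ≤ aInf ρ) (hp : ∀ z < s, ∃ p < aInf μ, Gst μ p = Gst ρ z) :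
    (∀ z < s, Ginv μ (Gst ρ z) < aInf μ ∧ Gst μ (Ginv μ (Gst ρ z)) = Gst ρ z) ∧
    AnalyticOnNhd ℝ (fun z => Ginv μ (Gst ρ z)) (Iio s) ∧
    ∀ z < s, 0 < deriv (fun z => Ginv μ (Gst ρ z)) z := by
  have h1 : ∀ z < s, Ginv μ (Gst ρ z) < aInf μ ∧ Gst μ (Ginv μ (Gst ρ z)) = Gst ρ z := by
    intro z hz
    obtain ⟨p, hpa, hpg⟩ := hp z hz
    rw [← hpg, Ginv_Gst hcμ hpa]
    exact ⟨hpa, rfl⟩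
  have h2 : AnalyticOnNhd ℝ (fun z => Ginv μ (Gst ρ z)) (Iio s) := by
    intro z hz
    have hi : AnalyticAt ℝ (Ginv μ) (Gst ρ z) := by
      rw [← (h1 z hz).2]; exact Ginv_analyticAt hcμ (h1 z hz).1
    exact hi.comp (Gst_analyticAt hcρ (lt_of_lt_of_le hz hs))
  refine ⟨h1, h2, fun z hz => ?_⟩
  have hzρ : z < aInf ρ := hz.trans_le hs
  have e : (fun z => Gst μ (Ginv μ (Gst ρ z))) =ᶠ[nhds z] Gst ρ := by
    filter_upwards [Iio_mem_nhds hz] with y hy using (h1 y hy).2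
  have hd := ((Gst_analyticAt hcμ (h1 z hz).1).differentiableAt.hasDerivAt.comp z
    (h2 z hz).differentiableAt.hasDerivAt).deriv
  have e2 : deriv (Gst μ ∘ fun z => Ginv μ (Gst ρ z)) z = deriv (Gst ρ) z := e.deriv_eq
  rw [e2, deriv_Gst hcρ hzρ, deriv_Gst hcμ (h1 z hz).1] at hd
  have := invMom_pos hcρ hzρ 2
  rw [hd] at this
  exact pos_of_mul_pos_right this (invMom_pos hcμ (h1 z hz).1 2).le

/-- The set of `z < a_ρ` at which both subordination functions take values left of `a_μ` and `a_ν`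
respectively, and add up correctly, is closed in `(-∞, a_ρ)`: absolute monotonicity carries the
subordination functions analytically across the endpoint `s`, where neither can reach `a_μ` or
`a_ν`, as `G_μ` or `G_ν` would continue analytically with it. -/
lemma subordination_closed (hcμ : HasCompactSupp μ) (hcν : HasCompactSupp ν)
    (hcρ : HasCompactSupp ρ) {s : ℝ} (hs : s < aInf ρ)
    (H : ∀ z < s, ∃ p < aInf μ, ∃ q < aInf ν, Gst μ p = Gst ρ z ∧ Gst ν q = Gst ρ z ∧
      p + q + (Gst ρ z)⁻¹ = z) :
    ∃ p < aInf μ, ∃ q < aInf ν, Gst μ p = Gst ρ s ∧ Gst ν q = Gst ρ s ∧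
      p + q + (Gst ρ s)⁻¹ = s := by
  obtain ⟨u1, uA, ud⟩ := subordination_analytic hcμ hcρ hs.le
    (fun z hz => let ⟨p, hp, _, _, h, _⟩ := H z hz; ⟨p, hp, h⟩)
  obtain ⟨v1, vA, vd⟩ := subordination_analytic hcν hcρ hs.le
    (fun z hz => let ⟨_, _, q, hq, _, h, _⟩ := H z hz; ⟨q, hq, h⟩)
  have hsum : ∀ z < s, Ginv μ (Gst ρ z) + Ginv ν (Gst ρ z) + (Gst ρ z)⁻¹ = z := by
    intro z hz
    obtain ⟨p, hp, q, hq, h1, h2, h3⟩ := H z hz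
    have e1 : Ginv μ (Gst ρ z) = p := by rw [← h1, Ginv_Gst hcμ hp]
    have e2 : Ginv ν (Gst ρ z) = q := by rw [← h2, Ginv_Gst hcν hq]
    rw [e1, e2, h3]
  set u : ℝ → ℝ := fun z => Ginv μ (Gst ρ z) with hu
  set v : ℝ → ℝ := fun z => Ginv ν (Gst ρ z) with hv
  change ∀ z < s, u z < aInf μ ∧ Gst μ (u z) = Gst ρ z at u1
  change ∀ z < s, v z < aInf ν ∧ Gst ν (v z) = Gst ρ z at v1
  change ∀ z < s, u z + v z + (Gst ρ z)⁻¹ = z at hsum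
  have hmono : ∀ n, AbsMono n (deriv u) (Iio s) ∧ AbsMono n (deriv v) (Iio s) := by
    refine fun n => absMono_deriv_subordination isOpen_Iio uA vA (hfun_analyticOnNhd hcμ)
      (hfun_analyticOnNhd hcν) (fun z hz => (u1 z hz).1) (fun z hz => (v1 z hz).1)
      (absMono_deriv_hfun hcμ) (absMono_deriv_hfun hcν) ?_ ?_ ud vd n
    · intro z hz
      rw [hfun, (v1 z hz).2]
      linarith [hsum z hz]
    · intro z hz
      rw [hfun, (u1 z hz).2]
      linarith [hsum z hz]
  have hu0 : ∀ n, ∀ z < s, 0 ≤ iteratedDeriv (n + 1) u z := fun n z hz => by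
    rw [iteratedDeriv_succ']
    exact AbsMono.iff_iteratedDeriv.1 (hmono n).1 n le_rfl z hz
  have hv0 : ∀ n, ∀ z < s, 0 ≤ iteratedDeriv (n + 1) v z := fun n z hz => by
    rw [iteratedDeriv_succ']
    exact AbsMono.iff_iteratedDeriv.1 (hmono n).2 n le_rfl z hz
  have hGρ := Gst_analyticAt hcρ hs
  have hGpos := Gst_pos hcρ hs
  have hw : AnalyticAt ℝ (fun z => z - (Gst ρ z)⁻¹) s :=
    analyticAt_id.fun_sub (hGρ.fun_inv hGpos.ne')
  obtain ⟨U, hU, hUu⟩ := exists_continuation_of_sum uA vA hw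
    (fun z hz => by linarith [hsum z hz]) hu0 hv0
  obtain ⟨V, hV, hVv⟩ := exists_continuation_of_sum vA uA hw
    (fun z hz => by linarith [hsum z hz]) hv0 hu0
  obtain ⟨ul, Ud, Ua⟩ := continuation_props uA ud (fun z hz => (hmono 1).1.2 z hz)
    (fun z hz => (u1 z hz).1) hU hUu
  obtain ⟨vl, Vd, Va⟩ := continuation_props vA vd (fun z hz => (hmono 1).2.2 z hz)
    (fun z hz => (v1 z hz).1) hV hVv
  have Gl : Tendsto (Gst ρ) (nhdsWithin s (Iio s)) (nhds (Gst ρ s)) :=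
    hGρ.continuousAt.tendsto.mono_left nhdsWithin_le_nhds
  have Ult : U s < aInf μ := Ua.lt_of_ne fun h => not_analytic_subordination hcμ hU Ud hGρ h (by
    filter_upwards [hUu, self_mem_nhdsWithin] with z hz hzs
    rw [hz, (u1 z hzs).2])
  have Vlt : V s < aInf ν := Va.lt_of_ne fun h => not_analytic_subordination hcν hV Vd hGρ h (by
    filter_upwards [hVv, self_mem_nhdsWithin] with z hz hzs
    rw [hz, (v1 z hzs).2])
  refine ⟨U s, Ult, V s, Vlt, ?_, ?_, ?_⟩
  · refine tendsto_nhds_unique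
      (((Gst_analyticAt hcμ Ult).continuousAt.tendsto.comp ul).congr' ?_) Gl
    exact eventually_mem_nhdsWithin.mono fun z hz => (u1 z hz).2
  · refine tendsto_nhds_unique
      (((Gst_analyticAt hcν Vlt).continuousAt.tendsto.comp vl).congr' ?_) Gl
    exact eventually_mem_nhdsWithin.mono fun z hz => (v1 z hz).2
  · refine tendsto_nhds_unique (((ul.add vl).add (Gl.inv₀ hGpos.ne')).congr' ?_)
      (tendsto_id.mono_left nhdsWithin_le_nhds)
    exact eventually_mem_nhdsWithin.mono fun z hz => hsum z hz

end Final

/-- If `S = sup F̂ < a_ρ`, the subordination functions would exist on `(-∞, S]`, so that `F̂` would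
take the value `S` at an interior point of its domain, past which it still increases. -/
lemma aInf_le_sSup {μ ν ρ : Measure ℝ} [IsProbabilityMeasure μ] [IsProbabilityMeasure ν]
    (hcμ : HasCompactSupp μ) (hcν : HasCompactSupp ν) (hρ : IsFreeAdd μ ν ρ)
    (hd : (FhatDom μ ν).Nonempty) (hle : ∀ h ∈ FhatDom μ ν, Fhat μ ν h ≤ aInf ρ) :
    aInf ρ ≤ sSup (Fhat μ ν '' FhatDom μ ν) := by
  have hbdd : BddAbove (Fhat μ ν '' FhatDom μ ν) := ⟨aInf ρ, by
    rintro _ ⟨h, hh, rfl⟩; exact hle h hh⟩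
  set s := sSup (Fhat μ ν '' FhatDom μ ν) with hsdef
  have hles : ∀ h ∈ FhatDom μ ν, Fhat μ ν h ≤ s := fun h hh =>
    le_csSup hbdd (mem_image_of_mem _ hh)
  by_contra! hlt
  have hconn : (FhatDom μ ν).OrdConnected :=
    ⟨fun x _ y hy z hz => FhatDom_mono hcμ hcν hy hz.2⟩
  obtain ⟨h0, hh0⟩ := hd
  have hEq := subordination_eqOn hcμ hcν hρ hconn.isPreconnected subset_rfl
    (mem_of_superset (Iic_mem_atBot h0) fun z hz => FhatDom_mono hcμ hcν hh0 hz)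
    (fun h hh => (hles h hh).trans_lt hlt)
  have hF := Fhat_tendsto_atBot hcν hρ
  obtain ⟨hp, hcρ, -⟩ := hρ
  -- by the intermediate value theorem `F̂` attains every `z < s`; its preimage is `q`
  have H : ∀ z < s, ∃ p < aInf μ, ∃ q < aInf ν, Gst μ p = Gst ρ z ∧ Gst ν q = Gst ρ z ∧
      p + q + (Gst ρ z)⁻¹ = z := by
    intro z hz
    obtain ⟨_, ⟨k, hk, rfl⟩, hzk⟩ := exists_lt_of_lt_csSup ⟨_, mem_image_of_mem _ hh0⟩ hz
    obtain ⟨c, hc1, hc2⟩ := ((hF.eventually (Iio_mem_atBot z)).and (Iio_mem_atBot k)).exists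
    have hc1 : Fhat μ ν c < z := hc1
    have hc2 : c < k := hc2
    have hcont : ContinuousOn (Fhat μ ν) (Icc c k) := fun t ht =>
      (Fhat_analyticAt hcμ hcν (FhatDom_mono hcμ hcν hk ht.2)).continuousAt.continuousWithinAt
    obtain ⟨q, hq, hFq⟩ := intermediate_value_Icc hc2.le hcont ⟨hc1.le, hzk.le⟩
    have hqd := FhatDom_mono hcμ hcν hk hq.2
    have hG := hEq q hqd
    obtain ⟨hqa, p, hpa, hpg⟩ := (mem_FhatDom hcμ hcν).1 hqd
    rw [hFq] at hG
    refine ⟨p, hpa, q, hqa, hpg.trans hG.symm, hG.symm, ?_⟩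
    rw [Fhat_eq, ← hpg, Ginv_Gst hcμ hpa, hpg, ← hG] at hFq
    linarith
  obtain ⟨p, hpa, q, hqa, hpg, hqg, hpq⟩ := subordination_closed hcμ hcν hcρ hlt H
  have hFq : Fhat μ ν q = s := by
    rw [Fhat_eq, hqg, ← hpg, Ginv_Gst hcμ hpa, hpg]
    linarith
  -- the domain is open at `q`, and `F̂` is increasing where it stays below `a_ρ`
  obtain ⟨p1, hp1, hp1a⟩ := exists_between hpa
  have hlt1 : Gst ν q < Gst μ p1 := by
    rw [hqg, ← hpg]; exact Gst_strictMonoOn hcμ hpa hp1a hp1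
  have hev : ∀ᶠ x in nhdsWithin q (Ioi q), Gst ν x < Gst μ p1 ∧ x < aInf ν ∧ q < x :=
    (((Gst_analyticAt hcν hqa).continuousAt.eventually_lt_const hlt1).filter_mono
      nhdsWithin_le_nhds).and ((eventually_nhdsWithin_of_eventually_nhds
        (Iio_mem_nhds hqa)).and eventually_mem_nhdsWithin)
  obtain ⟨x, hx1, hxa, hqx⟩ := hev.exists
  have hxd : x ∈ FhatDom μ ν := (mem_FhatDom hcμ hcν).2
    ⟨hxa, exists_Gst_eq hcμ (Gst_pos hcν hxa) hp1a hx1⟩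
  have h1 := (Gst_strictMonoOn hcρ).monotoneOn
    (show Fhat μ ν x ∈ Iio (aInf ρ) from (hles x hxd).trans_lt hlt) hlt (hles x hxd)
  rw [hEq x hxd, ← hqg] at h1
  exact absurd (Gst_strictMonoOn hcν hqa hxa hqx) (not_lt.2 h1)

end

/-- if `F̂_{μ,ν}` is strictly concave on its domain, then it is strictly
increasing up to `h*_{μ,ν}` and `z*_ρ` is the supremum of its values. -/
theorem statement5 (μ ν ρ : MeasureTheory.Measure ℝ)
    [MeasureTheory.IsProbabilityMeasure μ] [MeasureTheory.IsProbabilityMeasure ν]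
    (hcμ : HasCompactSupp μ) (hcν : HasCompactSupp ν) (hnd : Nondeg μ)
    (hρ : IsFreeAdd μ ν ρ)
    (hconc : StrictConcaveOn ℝ (FhatDom μ ν) (Fhat μ ν)) :
    (∀ t ∈ FhatDom μ ν, t < hstar μ ν → 0 < deriv (Fhat μ ν) t) ∧
    aInf ρ = sSup (Fhat μ ν '' FhatDom μ ν) := by
  obtain ⟨h1, hh1⟩ := Hhat_nonempty hcμ hcν hρ hconc
  have hle : ∀ h ∈ FhatDom μ ν, Fhat μ ν h ≤ aInf ρ := fun h hh =>
    Fhat_le_aInf hcμ hcν hρ hconc hh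
  refine ⟨fun t ht hlt => ?_, le_antisymm (aInf_le_sSup hcμ hcν hρ ⟨h1, hh1.1⟩ hle)
    (csSup_le ⟨_, mem_image_of_mem _ hh1.1⟩ ?_)⟩
  · obtain ⟨h, hh, hth⟩ := exists_lt_of_lt_csSup ⟨h1, hh1⟩ hlt
    exact hh.2 t ht hth
  · rintro _ ⟨h, hh, rfl⟩
    exact hle h hh
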